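/- arXiv:2403.04497 — 2 statements merged into one kernel-verified Lean document; each statement's English description precedes it below -/
import Mathlib

section
/- Let L, M be o-lattices with εL ⊆ M ⊆ L = L^♯, Q(M, M) ⊆ m, and dim_k(M/εL) = a. Then there exists an o-basis {v_1, …, v_D} of L such that Q(v_i, v_j) = δ_{i, D+1−j} and {v_1, …, v_a, ε v_{a+1}, …, ε v_D} is an o-basis of M. -/
noncomputable section

open scoped Classical

/-- The ring of integers `o = k[[ε]]` viewed as a subset of `F = k((ε))`. -/
def Oset (k : Type*) [Field k] : Set (LaurentSeries k) :=
  Set.range (HahnSeries.ofPowerSeries ℤ k)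

/-- The uniformizer `ε` of `k((ε))`. -/
def eps (k : Type*) [Field k] : LaurentSeries k := HahnSeries.single 1 1

/-- An `o`-lattice in `V = F^D`: the `o`-span of an `F`-basis of `V`. -/
def IsLat {k : Type*} [Field k] {D : ℕ} (L : Set (Fin D → LaurentSeries k)) : Prop :=
  ∃ b : Fin D → (Fin D → LaurentSeries k),
    LinearIndependent (LaurentSeries k) b ∧
    L = {v | ∃ c : Fin D → LaurentSeries k, (∀ i, c i ∈ Oset k) ∧ v = ∑ i, c i • b i}

/-- The dual lattice `L^♯ = {v ∈ V | Q(v, L) ⊆ o}`. -/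
def sharp {k : Type*} [Field k] {D : ℕ}
    (Q : LinearMap.BilinForm (LaurentSeries k) (Fin D → LaurentSeries k))
    (L : Set (Fin D → LaurentSeries k)) : Set (Fin D → LaurentSeries k) :=
  {v | ∀ x ∈ L, Q v x ∈ Oset k}


/-- The maximal ideal `m = ε·o` viewed as a subset of `F`. -/
def mSet (k : Type*) [Field k] : Set (LaurentSeries k) :=
  {y | ∃ z ∈ Oset k, y = eps k * z}

/-- The `m`-dual lattice `L^∗ = {v ∈ V | Q(v, L) ⊆ m}`. -/
def mstar {k : Type*} [Field k] {D : ℕ}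
    (Q : LinearMap.BilinForm (LaurentSeries k) (Fin D → LaurentSeries k))
    (L : Set (Fin D → LaurentSeries k)) : Set (Fin D → LaurentSeries k) :=
  {v | ∀ x ∈ L, Q v x ∈ mSet k}

/-- `w` is a `k`-basis of the quotient `M/N` of lattices `N ⊆ M`: representatives of a
basis of the finite-dimensional `k`-vector space `M/N`. -/
def IsQuotBasis {k : Type*} [Field k] {D a : ℕ}
    (N M : Set (Fin D → LaurentSeries k)) (w : Fin a → (Fin D → LaurentSeries k)) : Prop :=
  (∀ i, w i ∈ M) ∧
    (∀ x ∈ M, ∃ c : Fin a → k,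
      x - ∑ i, (HahnSeries.C (c i) : LaurentSeries k) • w i ∈ N) ∧
    (∀ c : Fin a → k, (∑ i, (HahnSeries.C (c i) : LaurentSeries k) • w i) ∈ N → c = 0)

/-!
A hyperbolic pair can be traded for another one by an Eichler-type exchange that keeps the family
split. Starting from the standard basis, first rescale an isotropic basis vector to be primitive in
`L`: since `L` is self-dual, it pairs to `1` with some element of `L`, which becomes isotropic after
subtracting a multiple of the first vector, and the pair is traded for these two. Hence all pairs
can be moved into `L`. The middle vector then lies in `L` automatically: the square of its pairing
with `x ∈ L` is `Q x x` minus products of pairings of `x` with vectors of `L`, hence integral.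

Next, as long as some element of `M` has a unit coordinate beyond the vectors already in `M`, a
second round of exchanges brings one more basis vector into `M`; it changes the basis vectors
already in `M` by multiples of elements of `L` with coefficients in `Q(M, M) ⊆ m`, that is, by
elements of `εL ⊆ M`. When no such element is left, `M` is described by its coordinates, and the
length of `M / εL` counts the basis vectors in `M`.
-/

section SplitFamily

variable {R V : Type*} [CommRing R] [AddCommGroup V] [Module R V] {D : ℕ}
  {Q : LinearMap.BilinForm R V} {b : Fin D → V} {p : Fin D} {x y : V}

/-- A family whose Gram matrix is the antidiagonal identity. The reflection `i ↦ D + 1 - i` of the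
paper is `Fin.rev`. -/
def IsSplit (Q : LinearMap.BilinForm R V) (b : Fin D → V) : Prop :=
  ∀ i j, Q (b i) (b j) = if j = i.rev then 1 else 0

theorem isSplit_iff_val_add_val :
    IsSplit Q b ↔ ∀ i j, Q (b i) (b j) = if (i : ℕ) + (j : ℕ) = D - 1 then 1 else 0 := by
  have val_add_val (i j : Fin D) : j = i.rev ↔ (i : ℕ) + (j : ℕ) = D - 1 := by
    rw [Fin.ext_iff, Fin.val_rev]; omega
  simp only [IsSplit, val_add_val]

namespace IsSplit

theorem apply_rev (hb : IsSplit Q b) (i : Fin D) : Q (b i) (b i.rev) = 1 := by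
  rw [hb, if_pos rfl]

theorem apply_of_ne_rev (hb : IsSplit Q b) {i j : Fin D} (h : j ≠ i.rev) : Q (b i) (b j) = 0 := by
  rw [hb, if_neg h]

theorem apply_self (hb : IsSplit Q b) {i : Fin D} (h : i.rev ≠ i) : Q (b i) (b i) = 0 :=
  hb.apply_of_ne_rev h.symm

theorem comp_perm (hb : IsSplit Q b) {τ : Equiv.Perm (Fin D)} (hτ : ∀ i, τ i.rev = (τ i).rev) :
    IsSplit Q (b ∘ τ) := fun i j ↦ by
  simp only [Function.comp_apply, hb _ _, ← hτ, τ.injective.eq_iff]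

theorem apply_sum_rev (hb : IsSplit Q b) (c : Fin D → R) (j : Fin D) :
    Q (∑ i, c i • b i) (b j.rev) = c j := by
  simp [hb _ _, Fin.rev_inj]

theorem apply_sum_castLE_rev (hb : IsSplit Q b) {r : ℕ} (hr : r ≤ D) (c : Fin r → R) (j : Fin D) :
    Q (∑ i, c i • b (Fin.castLE hr i)) (b j.rev) = if h : (j : ℕ) < r then c ⟨j, h⟩ else 0 := by
  have apply_castLE (i : Fin r) : Q (b (Fin.castLE hr i)) (b j.rev) =
      if Fin.castLE hr i = j then 1 else 0 := by
    simp only [hb _ _, Fin.rev_inj, eq_comm]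
  simp only [map_sum, map_smul, LinearMap.sum_apply, LinearMap.smul_apply, apply_castLE]
  split_ifs with hj
  · obtain ⟨i, rfl⟩ : ∃ i, Fin.castLE hr i = j := ⟨⟨j, hj⟩, rfl⟩
    simp [(Fin.castLE_injective hr).eq_iff]
  · refine Finset.sum_eq_zero fun i _ ↦ ?_
    rw [if_neg (by rintro rfl; exact hj i.2), smul_zero]

theorem linearIndependent (hb : IsSplit Q b) : LinearIndependent R b :=
  Fintype.linearIndependent_iff.2 fun c hc j ↦ by
    simpa [hc] using (hb.apply_sum_rev c j).symm

end IsSplit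

/-- The family obtained from `b` by putting `x` at `p`, `y` at `p.rev`, and correcting all other
vectors by a multiple of `x` to make them orthogonal to `y`. If `x = b p` this is an Eichler
transformation. -/
def exchange (Q : LinearMap.BilinForm R V) (b : Fin D → V) (p : Fin D) (x y : V) (i : Fin D) : V :=
  if i = p then x else if i = p.rev then y else b i - Q (b i) y • x

@[simp]
theorem exchange_self : exchange Q b p x y p = x := if_pos rfl

theorem exchange_rev (hp : p.rev ≠ p) : exchange Q b p x y p.rev = y := by
  rw [exchange, if_neg hp, if_pos rfl]

theorem exchange_of_ne {i : Fin D} (hp : i ≠ p) (hrev : i ≠ p.rev) :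
    exchange Q b p x y i = b i - Q (b i) y • x := by
  rw [exchange, if_neg hp, if_neg hrev]

theorem isSplit_exchange (hQ : Q.IsSymm) (hb : IsSplit Q b) (hp : p.rev ≠ p)
    (hx : Q x x = 0) (hy : Q y y = 0) (hxy : Q x y = 1)
    (hbx : ∀ i, i ≠ p → i ≠ p.rev → Q (b i) x = 0) : IsSplit Q (exchange Q b p x y) := by
  have hyx : Q y x = 1 := by rw [hQ.eq y x, hxy]
  have hrev : p ≠ p.rev := hp.symm
  have pair_x (j : Fin D) : Q x (exchange Q b p x y j) = if j = p.rev then 1 else 0 := by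
    unfold exchange
    split_ifs with h h' h'
    · exact absurd (h.symm.trans h') hrev
    · exact hx
    · exact hxy
    · rw [map_sub, map_smul, hx, smul_zero, sub_zero, hQ.eq x, hbx j h h']
  have pair_y (j : Fin D) : Q y (exchange Q b p x y j) = if j = p then 1 else 0 := by
    unfold exchange
    split_ifs with h h'
    · exact hyx
    · exact hy
    · rw [map_sub, map_smul, hyx, smul_eq_mul, mul_one, hQ.eq y, sub_self]
  intro i j
  rcases eq_or_ne i p with rfl | hi
  · rw [exchange_self, pair_x]
  rcases eq_or_ne i p.rev with rfl | hi'
  · rw [exchange_rev hp, pair_y, Fin.rev_rev]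
  have hji : j = i.rev → j ≠ p ∧ j ≠ p.rev := by
    rintro rfl
    exact ⟨fun h ↦ hi' (Fin.rev_eq_iff.1 h), fun h ↦ hi (Fin.rev_inj.1 h)⟩
  rw [exchange_of_ne hi hi', map_sub, map_smul, LinearMap.sub_apply, LinearMap.smul_apply, pair_x]
  unfold exchange
  split_ifs <;> simp_all [hb _ _]

end SplitFamily

theorem eq_of_rev_eq_self {D : ℕ} {i j : Fin D} (hi : i.rev = i) (hj : j.rev = j) : i = j := by
  rw [Fin.ext_iff, Fin.val_rev] at *
  omega

theorem exists_perm_comm_rev {D : ℕ} {p q : Fin D} (hp : p.rev ≠ p) (hq : q.rev ≠ q) :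
    ∃ τ : Equiv.Perm (Fin D), (∀ i, τ i.rev = (τ i).rev) ∧ τ p = q ∧
      ∀ i, i ≠ p → i ≠ q → i ≠ p.rev → i ≠ q.rev → τ i = i := by
  have swap_rev (a b i : Fin D) : (Equiv.swap a b i).rev = Equiv.swap a.rev b.rev i.rev :=
    Fin.rev_injective.map_swap a b i
  rcases eq_or_ne q p.rev with rfl | hqp
  · refine ⟨Equiv.swap p p.rev, fun i ↦ ?_, Equiv.swap_apply_left .., fun i hi hi' _ _ ↦
      Equiv.swap_apply_of_ne_of_ne hi hi'⟩
    rw [swap_rev, Fin.rev_rev, Equiv.swap_comm]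
  have hcomm : Commute (Equiv.swap p q) (Equiv.swap p.rev q.rev) := by
    rcases eq_or_ne p q with rfl | hpq
    · simp
    · refine (Equiv.Perm.disjoint_swap_swap ?_).commute
      simp [hpq, hp.symm, hq.symm, hqp, ← Fin.rev_eq_iff, hqp.symm]
  refine ⟨Equiv.swap p q * Equiv.swap p.rev q.rev, fun i ↦ ?_, ?_, fun i hp hq hp' hq' ↦ ?_⟩
  · simp only [Equiv.Perm.mul_apply, swap_rev, Fin.rev_rev]
    exact DFunLike.congr_fun hcomm.eq i.rev
  · have hpq : p ≠ q.rev := fun h ↦ hqp (Fin.rev_eq_iff.1 h.symm)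
    rw [Equiv.Perm.mul_apply, Equiv.swap_apply_of_ne_of_ne hp.symm hpq, Equiv.swap_apply_left]
  · rw [Equiv.Perm.mul_apply, Equiv.swap_apply_of_ne_of_ne hp' hq',
      Equiv.swap_apply_of_ne_of_ne hp hq]

section VectorSpace

variable {K V : Type*} [Field K] [AddCommGroup V] [Module K V] {D : ℕ}
  {Q : LinearMap.BilinForm K V} {b : Fin D → V}

/-- The translate of `y` by a multiple of `x` that is isotropic as soon as `x` is isotropic and
`Q x y = 1`. -/
def isotropize (Q : LinearMap.BilinForm K V) (x y : V) : V := y - (Q y y / 2) • x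

theorem apply_isotropize {x : V} (y : V) (hx : Q x x = 0) : Q x (isotropize Q x y) = Q x y := by
  simp [isotropize, hx]

theorem isotropize_apply_self (hQ : Q.IsSymm) (h2 : (2 : K) ≠ 0) {x y : V} (hx : Q x x = 0)
    (hxy : Q x y = 1) : Q (isotropize Q x y) (isotropize Q x y) = 0 := by
  have hyx : Q y x = 1 := by rw [hQ.eq y x, hxy]
  simp only [isotropize, map_sub, map_smul, LinearMap.sub_apply, LinearMap.smul_apply, hx, hxy,
    hyx, smul_eq_mul]
  field_simp
  ring

namespace IsSplit

variable [FiniteDimensional K V]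

theorem sum_apply_rev_smul (hb : IsSplit Q b) (hV : Module.finrank K V = D) (x : V) :
    ∑ i, Q x (b i.rev) • b i = x := by
  have hx : x ∈ Submodule.span K (Set.range b) := by
    rw [hb.linearIndependent.span_eq_top_of_card_eq_finrank' (by rw [Fintype.card_fin, hV])]
    trivial
  obtain ⟨c, rfl⟩ := (Submodule.mem_span_range_iff_exists_fun K).1 hx
  simp only [hb.apply_sum_rev]

theorem exists_sum_smul_eq_iff (hb : IsSplit Q b) (hV : Module.finrank K V = D)
    (P : Fin D → K → Prop) (x : V) :
    (∃ c : Fin D → K, (∀ i, P i (c i)) ∧ x = ∑ i, c i • b i) ↔ ∀ i, P i (Q x (b i.rev)) := by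
  constructor
  · rintro ⟨c, hc, rfl⟩ i
    rw [hb.apply_sum_rev]
    exact hc i
  · exact fun h ↦ ⟨_, h, (hb.sum_apply_rev_smul hV x).symm⟩

theorem sum_apply_mul_apply_rev (hb : IsSplit Q b) (hV : Module.finrank K V = D) (x : V) :
    ∑ i, Q x (b i) * Q x (b i.rev) = Q x x := by
  simpa [mul_comm] using congrArg (Q x) (hb.sum_apply_rev_smul hV x)

theorem apply_mul_self_mem {σ : Type*} [SetLike σ K] [AddSubgroupClass σ K] {S : σ}
    (hb : IsSplit Q b) (hV : Module.finrank K V = D) {x : V} (hx : Q x x ∈ S)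
    (hS : ∀ i, i.rev ≠ i → Q x (b i) * Q x (b i.rev) ∈ S) {j : Fin D} (hj : j.rev = j) :
    Q x (b j) * Q x (b j) ∈ S := by
  have hsum := hb.sum_apply_mul_apply_rev hV x
  rw [← Finset.add_sum_erase _ _ (Finset.mem_univ j), hj] at hsum
  rw [eq_sub_of_add_eq hsum]
  exact sub_mem hx (sum_mem fun i hi ↦ hS i fun h ↦
    Finset.ne_of_mem_erase hi (eq_of_rev_eq_self h hj))

end IsSplit

end VectorSpace

section SelfDualLattice

variable {K V : Type*} [Field K] {O : ValuationSubring K} [AddCommGroup V] [Module K V]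
  {Q : LinearMap.BilinForm K V} {L : Submodule O V} {D : ℕ} {b : Fin D → V} {p : Fin D}

theorem smul_mem_of_mem {c : K} (hc : c ∈ O) {x : V} (hx : x ∈ L) : c • x ∈ L :=
  L.smul_mem (⟨c, hc⟩ : O) hx

theorem mem_iff_forall_apply_mem (hL : Q.dualSubmodule L = L) {x : V} :
    x ∈ L ↔ ∀ y ∈ L, Q x y ∈ O := by
  conv_lhs => rw [← hL, LinearMap.BilinForm.mem_dualSubmodule]
  simp [Submodule.mem_one, Algebra.algebraMap_ofSubsemiring_apply]

theorem isotropize_mem (h2 : O.valuation 2 = 1) {x y : V} (hx : x ∈ L) (hy : y ∈ L)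
    (hyy : Q y y ∈ O) : isotropize Q x y ∈ L := by
  refine L.sub_mem hy (smul_mem_of_mem ?_ hx)
  rwa [← O.valuation_le_one_iff, map_div₀, h2, div_one, O.valuation_le_one_iff]

theorem exchange_mem (hL : Q.dualSubmodule L = L) {x y : V} (hx : x ∈ L) (hy : y ∈ L) {i : Fin D}
    (hi : b i ∈ L) : exchange Q b p x y i ∈ L := by
  unfold exchange
  split_ifs
  · exact hx
  · exact hy
  · exact L.sub_mem hi (smul_mem_of_mem ((mem_iff_forall_apply_mem hL).1 hi y hy) hx)

theorem exists_mem_forall_div_mem [hL : L.IsLattice K] {f : V →ₗ[K] K} (hf : f ≠ 0) :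
    ∃ y ∈ L, f y ≠ 0 ∧ ∀ z ∈ L, f z / f y ∈ O := by
  obtain ⟨s, hs⟩ := hL.fg
  obtain ⟨y, hy, hmax⟩ := (insert 0 s).exists_max_image (fun z ↦ O.valuation (f z))
    (Finset.insert_nonempty 0 s)
  have hspan : Submodule.span O (insert 0 s : Finset V) = L := by
    rw [Finset.coe_insert, Submodule.span_insert_zero, hs]
  have hle (z : V) (hz : z ∈ L) : O.valuation (f z) ≤ O.valuation (f y) := by
    rw [← hspan] at hz
    induction hz using Submodule.span_induction with
    | mem z hz => exact hmax z hz
    | zero => simp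
    | add z w _ _ hz hw =>
      rw [map_add]
      exact (O.valuation.map_add _ _).trans (max_le hz hw)
    | smul c z _ hz =>
      rw [LinearMap.map_smul_of_tower, Algebra.smul_def, map_mul]
      exact (mul_le_of_le_one_left' (O.valuation_le_one c)).trans hz
  have hy0 : f y ≠ 0 := by
    refine fun h ↦ hf (LinearMap.ext_on hL.span_eq_top fun z hz ↦ ?_)
    simpa [h] using hle z hz
  refine ⟨y, hspan ▸ Submodule.subset_span hy, hy0, fun z hz ↦ ?_⟩
  rw [← O.valuation_le_one_iff, map_div₀]
  exact div_le_one_of_le₀ (hle z hz) zero_le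

theorem exists_isSplit_mem_pair (hQ : Q.IsSymm) (h2 : O.valuation 2 = 1) [L.IsLattice K]
    (hL : Q.dualSubmodule L = L) (hb : IsSplit Q b) (hp : p.rev ≠ p) :
    ∃ b' : Fin D → V, IsSplit Q b' ∧ b' p ∈ L ∧ ∀ i, b i ∈ L → b' i ∈ L := by
  have hbp : Q (b p) ≠ 0 := fun h ↦ by simpa [h] using hb.apply_rev p
  obtain ⟨y, hyL, hy0, hdiv⟩ := exists_mem_forall_div_mem (L := L) hbp
  set x := (Q (b p) y)⁻¹ • b p with hx
  have hxL : x ∈ L := (mem_iff_forall_apply_mem hL).2 fun z hz ↦ by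
    simpa [hx, div_eq_inv_mul] using hdiv z hz
  have hxx : Q x x = 0 := by simp [hx, hb.apply_self hp]
  have hxy : Q x y = 1 := by simp [hx, hy0]
  have hy'L : isotropize Q x y ∈ L :=
    isotropize_mem h2 hxL hyL ((mem_iff_forall_apply_mem hL).1 hyL y hyL)
  refine ⟨exchange Q b p x (isotropize Q x y), ?_, by rwa [exchange_self],
    fun i hi ↦ exchange_mem hL hxL hy'L hi⟩
  have h2' : (2 : K) ≠ 0 := fun h ↦ by simp [h] at h2
  refine isSplit_exchange hQ hb hp hxx (isotropize_apply_self hQ h2' hxx hxy)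
    ((apply_isotropize y hxx).trans hxy) fun i _ hi ↦ ?_
  rw [hx, map_smul, hb.apply_of_ne_rev fun h ↦ hi (Fin.rev_eq_iff.1 h.symm), smul_zero]

theorem exists_isSplit_forall_mem_of_rev_ne (hQ : Q.IsSymm) (h2 : O.valuation 2 = 1)
    [L.IsLattice K] (hL : Q.dualSubmodule L = L) (hb : IsSplit Q b) :
    ∃ b' : Fin D → V, IsSplit Q b' ∧ ∀ i, i.rev ≠ i → b' i ∈ L := by
  suffices h : ∀ s : Finset (Fin D), ∃ b' : Fin D → V, IsSplit Q b' ∧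
      ∀ i ∈ s, i.rev ≠ i → b' i ∈ L by
    simpa using h Finset.univ
  intro s
  induction s using Finset.induction with
  | empty => exact ⟨b, hb, by simp⟩
  | insert p s _ ih =>
    obtain ⟨c, hc, hcL⟩ := ih
    by_cases hp : p.rev = p
    · exact ⟨c, hc, fun i hi hi' ↦ hcL i (Finset.mem_of_mem_insert_of_ne hi
        fun h ↦ hi' (h ▸ hp)) hi'⟩
    obtain ⟨c', hc', hpL, hkeep⟩ := exists_isSplit_mem_pair hQ h2 hL hc hp
    refine ⟨c', hc', fun i hi hi' ↦ ?_⟩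
    rcases Finset.mem_insert.1 hi with rfl | hi
    · exact hpL
    · exact hkeep i (hcL i hi hi')

theorem mem_of_mul_self_mem {x : K} (hx : x * x ∈ O) : x ∈ O := by
  rw [← O.valuation_le_one_iff, map_mul] at hx
  exact O.valuation_le_one_iff x |>.1 (not_lt.1 fun h ↦ hx.not_gt (one_lt_mul'' h h))

theorem mem_of_rev_eq_self [FiniteDimensional K V] (hV : Module.finrank K V = D) (hQ : Q.IsSymm)
    (hL : Q.dualSubmodule L = L) (hb : IsSplit Q b) (hbL : ∀ i, i.rev ≠ i → b i ∈ L) {j : Fin D}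
    (hj : j.rev = j) : b j ∈ L := by
  refine (mem_iff_forall_apply_mem hL).2 fun x hx ↦ mem_of_mul_self_mem ?_
  have hxO (y : V) (hy : y ∈ L) : Q x y ∈ O := (mem_iff_forall_apply_mem hL).1 hx y hy
  have hsq : Q x (b j) * Q x (b j) ∈ O :=
    hb.apply_mul_self_mem hV (hxO x hx) (fun i hi ↦ mul_mem (hxO _ (hbL i hi))
      (hxO _ (hbL i.rev fun h ↦ hi (Fin.rev_inj.1 h)))) hj
  rwa [hQ.eq] at hsq

theorem exists_isSplit_forall_mem [FiniteDimensional K V] (hV : Module.finrank K V = D)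
    (hQ : Q.IsSymm) (h2 : O.valuation 2 = 1) [L.IsLattice K] (hL : Q.dualSubmodule L = L)
    (hb : IsSplit Q b) : ∃ b' : Fin D → V, IsSplit Q b' ∧ ∀ i, b' i ∈ L := by
  obtain ⟨c, hc, hcL⟩ := exists_isSplit_forall_mem_of_rev_ne hQ h2 hL hb
  exact ⟨c, hc, fun i ↦ (eq_or_ne i.rev i).elim (mem_of_rev_eq_self hV hQ hL hc hcL) (hcL i)⟩

theorem mem_iff_forall_coord_mem [FiniteDimensional K V] (hV : Module.finrank K V = D)
    (hL : Q.dualSubmodule L = L) (hb : IsSplit Q b) (hbL : ∀ i, b i ∈ L) {x : V} :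
    x ∈ L ↔ ∀ i : Fin D, Q x (b i.rev) ∈ O := by
  refine ⟨fun hx i ↦ (mem_iff_forall_apply_mem hL).1 hx _ (hbL i.rev), fun h ↦ ?_⟩
  rw [← hb.sum_apply_rev_smul hV x]
  exact L.sum_mem fun i _ ↦ smul_mem_of_mem (h i) (hbL i)

end SelfDualLattice

theorem length_quotient_eq_card {R E ι : Type*} [CommRing R] [IsLocalRing R] [AddCommGroup E]
    [Module R E] [Fintype ι] {N M : Submodule R E} {w : ι → E} (hwM : ∀ i, w i ∈ M)
    (hspan : ∀ x ∈ M, ∃ c : ι → R, x - ∑ i, c i • w i ∈ N)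
    (hker : ∀ c : ι → R, ∑ i, c i • w i ∈ N ↔ ∀ i, c i ∈ IsLocalRing.maximalIdeal R) :
    Module.length R (M ⧸ N.submoduleOf M) = Fintype.card ι := by
  let φ : (ι → R) →ₗ[R] M ⧸ N.submoduleOf M :=
    (N.submoduleOf M).mkQ ∘ₗ Fintype.linearCombination R fun i ↦ (⟨w i, hwM i⟩ : M)
  have coe_sum (c : ι → R) :
      ((Fintype.linearCombination R (fun i ↦ (⟨w i, hwM i⟩ : M)) c : M) : E) = ∑ i, c i • w i := by
    simp [Fintype.linearCombination_apply]
  have hφ : Function.Surjective φ := fun z ↦ by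
    obtain ⟨x, rfl⟩ := (N.submoduleOf M).mkQ_surjective z
    obtain ⟨c, hc⟩ := hspan x x.2
    refine ⟨c, Eq.symm ((Submodule.Quotient.eq _).2 ?_)⟩
    rwa [Submodule.submoduleOf, Submodule.mem_comap, map_sub, Submodule.subtype_apply,
      Submodule.subtype_apply, coe_sum]
  have hφker : LinearMap.ker φ =
      Submodule.pi Set.univ fun _ : ι ↦ IsLocalRing.maximalIdeal R := by
    ext c
    rw [LinearMap.mem_ker, LinearMap.comp_apply, Submodule.mkQ_apply,
      Submodule.Quotient.mk_eq_zero, Submodule.submoduleOf, Submodule.mem_comap,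
      Submodule.subtype_apply, coe_sum, hker]
    simp
  have hfield : Module.length R (R ⧸ IsLocalRing.maximalIdeal R) = 1 :=
    Module.length_eq_one_iff.2
    (isSimpleModule_iff_isCoatom.2 (IsLocalRing.maximalIdeal.isMaximal R).out)
  rw [← (φ.quotKerEquivOfSurjective hφ).length_eq, hφker,
    (Submodule.quotientPi _).length_eq, Module.length_pi, hfield, mul_one,
    ENat.card_eq_coe_fintype_card]

section AdaptedBasis

variable {K V : Type*} [Field K] {O : ValuationSubring K} [AddCommGroup V] [Module K V]
  {Q : LinearMap.BilinForm K V} {L M : Submodule O V} {D : ℕ} {b : Fin D → V} {r : ℕ}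

theorem mul_mem_nonunits {x y : K} (hx : x ∈ O) (hy : y ∈ O.nonunits) : x * y ∈ O.nonunits := by
  rw [ValuationSubring.mem_nonunits_iff, map_mul]
  exact mul_lt_one_of_nonneg_of_lt_one_right ((O.valuation_le_one_iff x).2 hx) zero_le hy

theorem mem_nonunits_of_mul_self_mem {x : K} (hx : x * x ∈ O.nonunits) : x ∈ O.nonunits := by
  rw [ValuationSubring.mem_nonunits_iff, map_mul] at hx
  rw [ValuationSubring.mem_nonunits_iff]
  exact not_le.1 fun h ↦ hx.not_ge (one_le_mul h h)

theorem inv_mem_of_notMem_nonunits {x : K} (hx : x ∉ O.nonunits) : x⁻¹ ∈ O := by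
  rw [ValuationSubring.mem_nonunits_iff, not_lt] at hx
  rw [← O.valuation_le_one_iff, map_inv₀]
  exact inv_le_one_of_one_le₀ hx

theorem smul_mem_maximalIdeal_smul {c : K} (hc : c ∈ O.nonunits) {x : V} (hx : x ∈ L) :
    c • x ∈ IsLocalRing.maximalIdeal O • L := by
  obtain ⟨hcO, hcm⟩ := O.mem_nonunits_iff_exists_mem_maximalIdeal.1 hc
  exact Submodule.smul_mem_smul hcm hx

theorem isotropize_mem_of_apply_self_mem_nonunits (h2 : O.valuation 2 = 1)
    (hmL : IsLocalRing.maximalIdeal O • L ≤ M) {x y : V} (hx : x ∈ L) (hy : y ∈ M)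
    (hyy : Q y y ∈ O.nonunits) : isotropize Q x y ∈ M := by
  refine M.sub_mem hy (hmL (smul_mem_maximalIdeal_smul ?_ hx))
  rwa [ValuationSubring.mem_nonunits_iff, map_div₀, h2, div_one]

/-- A split basis of the lattice `L` whose first `r` vectors lie in `M`. -/
structure IsAdapted (Q : LinearMap.BilinForm K V) (L M : Submodule O V) (r : ℕ) (b : Fin D → V) :
    Prop where
  isSplit : IsSplit Q b
  mem : ∀ i, b i ∈ L
  mem_of_lt : ∀ i : Fin D, (i : ℕ) < r → b i ∈ M

theorem isAdapted_exchange (hQ : Q.IsSymm) (hL : Q.dualSubmodule L = L) (hML : M ≤ L)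
    (hmL : IsLocalRing.maximalIdeal O • L ≤ M) (hMM : ∀ x ∈ M, ∀ y ∈ M, Q x y ∈ O.nonunits)
    (hb : IsAdapted Q L M r b) {p : Fin D} (hp : p.rev ≠ p) (hrp : r ≤ p) (hrp' : r ≤ (p.rev : ℕ))
    {y : V} (hy : y ∈ M) (hyy : Q y y = 0) (hpy : Q (b p) y = 1) :
    IsAdapted Q L M r (exchange Q b p (b p) y) where
  isSplit := isSplit_exchange hQ hb.isSplit hp (hb.isSplit.apply_self hp) hyy hpy fun _ _ hi ↦
    hb.isSplit.apply_of_ne_rev fun h ↦ hi (Fin.rev_eq_iff.1 h.symm)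
  mem _ := exchange_mem hL (hb.mem p) (hML hy) (hb.mem _)
  mem_of_lt i hi := by
    have hip : i ≠ p := fun h ↦ hi.not_ge (h ▸ hrp)
    have hip' : i ≠ p.rev := fun h ↦ hi.not_ge (h ▸ hrp')
    rw [exchange_of_ne hip hip']
    exact M.sub_mem (hb.mem_of_lt i hi) (hmL (smul_mem_maximalIdeal_smul
      (hMM _ (hb.mem_of_lt i hi) y hy) (hb.mem p)))

namespace IsAdapted

theorem exists_rev_ne [FiniteDimensional K V] (hV : Module.finrank K V = D)
    (hL : Q.dualSubmodule L = L) (hML : M ≤ L) (hMM : ∀ x ∈ M, ∀ y ∈ M, Q x y ∈ O.nonunits)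
    (hb : IsAdapted Q L M r b) {x : V} (hx : x ∈ M) {i : Fin D} (hi : r ≤ (i.rev : ℕ))
    (hxi : Q x (b i) ∉ O.nonunits) :
    ∃ p : Fin D, p.rev ≠ p ∧ r ≤ p ∧ r ≤ (p.rev : ℕ) ∧ Q x (b p) ∉ O.nonunits := by
  have apply_mem_of_lt (j : Fin D) (hj : (j : ℕ) < r) : Q x (b j) ∈ O.nonunits :=
    hMM x hx _ (hb.mem_of_lt j hj)
  rcases eq_or_ne i.rev i with hmid | hne
  · by_contra! h
    have hxO (j : Fin D) : Q x (b j) ∈ O :=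
      (mem_iff_forall_apply_mem hL).1 (hML hx) _ (hb.mem j)
    have hprod (j : Fin D) (hj : j.rev ≠ j) : Q x (b j) * Q x (b j.rev) ∈ O.nonunits := by
      rcases lt_or_ge (j.rev : ℕ) r with hjr' | hjr'
      · exact mul_mem_nonunits (hxO j) (apply_mem_of_lt _ hjr')
      · rw [mul_comm]
        refine mul_mem_nonunits (hxO _) ?_
        rcases lt_or_ge (j : ℕ) r with hjr | hjr
        · exact apply_mem_of_lt _ hjr
        · exact h j hj hjr hjr'
    exact hxi (mem_nonunits_of_mul_self_mem
      (hb.isSplit.apply_mul_self_mem hV (hMM x hx x hx) hprod hmid))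
  · exact ⟨i, hne, not_lt.1 fun h ↦ hxi (apply_mem_of_lt i h), hi, hxi⟩

theorem exists_succ_of_mem (hb : IsAdapted Q L M r b) {q : Fin D} (hq : q.rev ≠ q) (hrq : r ≤ q)
    (hrq' : r ≤ (q.rev : ℕ)) (hqM : b q ∈ M) : ∃ b' : Fin D → V, IsAdapted Q L M (r + 1) b' := by
  let p : Fin D := ⟨r, hrq.trans_lt q.2⟩
  have hrp : r < (p.rev : ℕ) := by
    rw [Ne, Fin.ext_iff] at hq
    rw [Fin.val_rev] at *
    grind
  obtain ⟨τ, hτrev, hτp, hτ⟩ := exists_perm_comm_rev (p := p)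
    (fun h ↦ hrp.ne' (congrArg Fin.val h)) hq
  refine ⟨b ∘ τ, hb.isSplit.comp_perm hτrev, fun i ↦ hb.mem _, fun i hi ↦ ?_⟩
  rcases Nat.lt_succ_iff_lt_or_eq.1 hi with hi | rfl
  · have ne_of_le {j : Fin D} (hj : r ≤ j) : i ≠ j := fun h ↦ hi.not_ge (h ▸ hj)
    rw [Function.comp_apply,
      hτ i (ne_of_le le_rfl) (ne_of_le hrq) (ne_of_le hrp.le) (ne_of_le hrq')]
    exact hb.mem_of_lt i hi
  · rwa [Function.comp_apply, hτp]

theorem exists_succ [FiniteDimensional K V] (hV : Module.finrank K V = D) (hQ : Q.IsSymm)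
    (h2 : O.valuation 2 = 1) (hL : Q.dualSubmodule L = L) (hML : M ≤ L)
    (hmL : IsLocalRing.maximalIdeal O • L ≤ M) (hMM : ∀ x ∈ M, ∀ y ∈ M, Q x y ∈ O.nonunits)
    (hb : IsAdapted Q L M r b) {x : V} (hx : x ∈ M) {i : Fin D} (hi : r ≤ (i.rev : ℕ))
    (hxi : Q x (b i) ∉ O.nonunits) : ∃ b' : Fin D → V, IsAdapted Q L M (r + 1) b' := by
  obtain ⟨p, hp, hrp, hrp', hxp⟩ := hb.exists_rev_ne hV hL hML hMM hx hi hxi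
  have hpp : Q (b p) (b p) = 0 := hb.isSplit.apply_self hp
  set z := (Q x (b p))⁻¹ • x with hz
  have hzM : z ∈ M := smul_mem_of_mem (inv_mem_of_notMem_nonunits hxp) hx
  have hpz : Q (b p) z = 1 := by
    rw [hz, map_smul, smul_eq_mul, hQ.eq (b p), inv_mul_cancel₀]
    exact fun h ↦ hxp (h ▸ zero_mem _)
  set y := isotropize Q (b p) z
  have hyM : y ∈ M :=
    isotropize_mem_of_apply_self_mem_nonunits h2 hmL (hb.mem p) hzM (hMM z hzM z hzM)
  have h2' : (2 : K) ≠ 0 := fun h ↦ by simp [h] at h2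
  have hb' := isAdapted_exchange hQ hL hML hmL hMM hb hp hrp hrp' hyM
    (isotropize_apply_self hQ h2' hpp hpz) ((apply_isotropize z hpp).trans hpz)
  exact hb'.exists_succ_of_mem (q := p.rev) (fun h ↦ hp (Fin.rev_inj.1 h)) hrp'
    (by rwa [Fin.rev_rev]) (by rwa [exchange_rev hp])

end IsAdapted

theorem exists_isAdapted_forall_apply_mem [FiniteDimensional K V]
    (hV : Module.finrank K V = D) (hQ : Q.IsSymm) (h2 : O.valuation 2 = 1) [L.IsLattice K]
    (hL : Q.dualSubmodule L = L) (hML : M ≤ L) (hmL : IsLocalRing.maximalIdeal O • L ≤ M)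
    (hMM : ∀ x ∈ M, ∀ y ∈ M, Q x y ∈ O.nonunits) (hb : IsSplit Q b) :
    ∃ r ≤ D, ∃ b' : Fin D → V, IsAdapted Q L M r b' ∧
      ∀ x ∈ M, ∀ i : Fin D, r ≤ i → Q x (b' i.rev) ∈ O.nonunits := by
  let P (r : ℕ) : Prop := ∃ b' : Fin D → V, IsAdapted Q L M r b'
  have hP0 : P 0 := by
    obtain ⟨b', hb', hb'L⟩ := exists_isSplit_forall_mem hV hQ h2 hL hb
    exact ⟨b', hb', hb'L, fun i hi ↦ absurd hi (Nat.not_lt_zero _)⟩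
  obtain ⟨b', hb'⟩ : P (Nat.findGreatest P D) := Nat.findGreatest_spec (Nat.zero_le D) hP0
  refine ⟨_, Nat.findGreatest_le D, b', hb', fun x hx i hi ↦ ?_⟩
  by_contra hxi
  exact Nat.findGreatest_is_greatest (Nat.lt_succ_self _) (hi.trans_lt i.2)
    (hb'.exists_succ hV hQ h2 hL hML hmL hMM hx (by rwa [Fin.rev_rev]) hxi)

theorem mem_maximalIdeal_smul_iff_forall_coord [FiniteDimensional K V]
    (hV : Module.finrank K V = D) (hL : Q.dualSubmodule L = L) (hb : IsSplit Q b)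
    (hbL : ∀ i, b i ∈ L) {x : V} :
    x ∈ IsLocalRing.maximalIdeal O • L ↔ ∀ i : Fin D, Q x (b i.rev) ∈ O.nonunits := by
  refine ⟨fun hx i ↦ ?_, fun h ↦ ?_⟩
  · refine Submodule.smul_induction_on hx (fun c hc y hy ↦ ?_) fun y z hy hz ↦ ?_
    · rw [LinearMap.map_smul_of_tower, LinearMap.smul_apply, Algebra.smul_def, mul_comm]
      exact mul_mem_nonunits ((mem_iff_forall_coord_mem hV hL hb hbL).1 hy i)
        (O.coe_mem_nonunits_iff.2 hc)
    · rw [map_add]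
      exact add_mem hy hz
  · rw [← hb.sum_apply_rev_smul hV x]
    exact Submodule.sum_mem _ fun i _ ↦ smul_mem_maximalIdeal_smul (h i) (hbL i)

namespace IsAdapted

theorem mem_iff_forall_coord [FiniteDimensional K V] (hV : Module.finrank K V = D)
    (hL : Q.dualSubmodule L = L) (hML : M ≤ L) (hmL : IsLocalRing.maximalIdeal O • L ≤ M)
    (hb : IsAdapted Q L M r b)
    (hmax : ∀ x ∈ M, ∀ i : Fin D, r ≤ i → Q x (b i.rev) ∈ O.nonunits) {x : V} :
    x ∈ M ↔ ∀ i : Fin D, Q x (b i.rev) ∈ O ∧ (r ≤ i → Q x (b i.rev) ∈ O.nonunits) := by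
  refine ⟨fun hx i ↦ ⟨(mem_iff_forall_coord_mem hV hL hb.isSplit hb.mem).1 (hML hx) i,
    hmax x hx i⟩, fun h ↦ ?_⟩
  rw [← hb.isSplit.sum_apply_rev_smul hV x]
  refine M.sum_mem fun i _ ↦ ?_
  rcases lt_or_ge (i : ℕ) r with hir | hir
  · exact smul_mem_of_mem (h i).1 (hb.mem_of_lt i hir)
  · exact hmL (smul_mem_maximalIdeal_smul ((h i).2 hir) (hb.mem i))

theorem length_quotient [FiniteDimensional K V] (hV : Module.finrank K V = D)
    (hL : Q.dualSubmodule L = L) (hML : M ≤ L) (hb : IsAdapted Q L M r b)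
    (hmax : ∀ x ∈ M, ∀ i : Fin D, r ≤ i → Q x (b i.rev) ∈ O.nonunits) (hr : r ≤ D) :
    Module.length O (M ⧸ (IsLocalRing.maximalIdeal O • L).submoduleOf M) = r := by
  have coord (c : Fin r → O) (j : Fin D) : Q (∑ i, c i • b (Fin.castLE hr i)) (b j.rev) =
      if h : (j : ℕ) < r then (c ⟨j, h⟩ : K) else 0 :=
    hb.isSplit.apply_sum_castLE_rev hr (fun i ↦ (c i : K)) j
  rw [← Fintype.card_fin r]
  refine length_quotient_eq_card (w := fun i ↦ b (Fin.castLE hr i))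
    (fun i ↦ hb.mem_of_lt _ i.2) (fun x hx ↦ ?_) fun c ↦ ?_
  · have hxO := (mem_iff_forall_coord_mem hV hL hb.isSplit hb.mem).1 (hML hx)
    refine ⟨fun i ↦ ⟨_, hxO (Fin.castLE hr i)⟩,
      (mem_maximalIdeal_smul_iff_forall_coord hV hL hb.isSplit hb.mem).2 fun j ↦ ?_⟩
    rw [map_sub, LinearMap.sub_apply, coord]
    split_ifs with hj
    · simp [zero_mem]
    · rw [sub_zero]
      exact hmax x hx j (not_lt.1 hj)
  · rw [mem_maximalIdeal_smul_iff_forall_coord hV hL hb.isSplit hb.mem]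
    simp only [coord, ← O.coe_mem_nonunits_iff]
    refine ⟨fun h i ↦ by simpa using h (Fin.castLE hr i), fun h j ↦ ?_⟩
    split_ifs
    exacts [h _, zero_mem _]

end IsAdapted

theorem affine_extend_basis_general (e : Module.Basis (Fin D) K V) (he : IsSplit Q e)
    (hQ : Q.IsSymm) (h2 : O.valuation 2 = 1) [L.IsLattice K] (hL : Q.dualSubmodule L = L)
    (hmL : IsLocalRing.maximalIdeal O • L ≤ M) (hML : M ≤ L)
    (hMM : ∀ x ∈ M, ∀ y ∈ M, Q x y ∈ O.nonunits) {a : ℕ}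
    (ha : Module.length O (M ⧸ (IsLocalRing.maximalIdeal O • L).submoduleOf M) = a) :
    ∃ b : Fin D → V, IsSplit Q b ∧
      (L : Set V) = {v | ∃ c : Fin D → K, (∀ i, c i ∈ O) ∧ v = ∑ i, c i • b i} ∧
      (M : Set V) = {v | ∃ c : Fin D → K, (∀ i, c i ∈ O) ∧
        (∀ i : Fin D, a ≤ i → c i ∈ O.nonunits) ∧ v = ∑ i, c i • b i} := by
  have := Module.Finite.of_basis e
  have hV : Module.finrank K V = D := by simp [Module.finrank_eq_card_basis e]
  obtain ⟨r, hr, b, hb, hmax⟩ := exists_isAdapted_forall_apply_mem hV hQ h2 hL hML hmL hMM he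
  obtain rfl : r = a := by exact_mod_cast (hb.length_quotient hV hL hML hmax hr).symm.trans ha
  refine ⟨b, hb.isSplit, Set.ext fun x ↦ ?_, Set.ext fun x ↦ ?_⟩
  · exact (mem_iff_forall_coord_mem hV hL hb.isSplit hb.mem).trans
      (hb.isSplit.exists_sum_smul_eq_iff hV (fun _ c ↦ c ∈ O) x).symm
  · simpa only [forall_and, and_assoc, SetLike.mem_coe, Set.mem_ofPred_eq] using
      (hb.mem_iff_forall_coord hV hL hML hmL hmax).trans (hb.isSplit.exists_sum_smul_eq_iff hV
        (fun i c ↦ c ∈ O ∧ (r ≤ i → c ∈ O.nonunits)) x).symm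

end AdaptedBasis

section LaurentSeries

variable {k : Type*} [Field k] {x : LaurentSeries k}

open scoped WithZero in
/-- The ring of integers `Oset k` as a valuation subring; its nonunits form `mSet k`. -/
def laurentIntegers (k : Type*) [Field k] : ValuationSubring (LaurentSeries k) :=
  (Valued.v : Valuation (LaurentSeries k) ℤᵐ⁰).valuationSubring

theorem mem_laurentIntegers_iff : x ∈ laurentIntegers k ↔ x ∈ Oset k :=
  LaurentSeries.val_le_one_iff_eq_coe k x

theorem C_mem_laurentIntegers (c : k) : (HahnSeries.C c : LaurentSeries k) ∈ laurentIntegers k :=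
  mem_laurentIntegers_iff.2 ⟨PowerSeries.C c, HahnSeries.ofPowerSeries_C c⟩

theorem valuation_C_eq_one {c : k} (hc : c ≠ 0) :
    (laurentIntegers k).valuation (HahnSeries.C c) = 1 := by
  refine le_antisymm (((laurentIntegers k).valuation_le_one_iff _).2 (C_mem_laurentIntegers c)) ?_
  have hC : (HahnSeries.C c : LaurentSeries k) ≠ 0 := HahnSeries.C_ne_zero hc
  rw [← inv_le_one₀ (zero_lt_iff.2 ((map_ne_zero _).2 hC)), ← map_inv₀, ← map_inv₀]
  exact ((laurentIntegers k).valuation_le_one_iff _).2 (C_mem_laurentIntegers c⁻¹)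

theorem valuation_two_eq_one (hk : ringChar k ≠ 2) : (laurentIntegers k).valuation 2 = 1 := by
  rw [← map_ofNat (HahnSeries.C : k →+* LaurentSeries k) 2]
  exact valuation_C_eq_one (Ring.two_ne_zero hk)

theorem eps_mem_nonunits : eps k ∈ (laurentIntegers k).nonunits := by
  rw [ValuationSubring.mem_nonunits_iff, laurentIntegers,
    ← (Valuation.isEquiv_valuation_valuationSubring _).lt_one_iff_lt_one, eps,
    LaurentSeries.valuation_single_zpow, ← WithZero.exp_zero, WithZero.exp_lt_exp]
  exact neg_one_lt_zero

theorem exists_sub_C_mem_mSet (hx : x ∈ Oset k) : ∃ c : k, x - HahnSeries.C c ∈ mSet k := by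
  obtain ⟨f, rfl⟩ := hx
  refine ⟨PowerSeries.constantCoeff f, _, ⟨PowerSeries.mk fun n ↦ PowerSeries.coeff (n + 1) f,
    rfl⟩, ?_⟩
  rw [sub_eq_iff_eq_add, eps, ← HahnSeries.ofPowerSeries_X, ← map_mul,
    ← HahnSeries.ofPowerSeries_C (Γ := ℤ), ← map_add, ← PowerSeries.eq_X_mul_shift_add_const]

theorem mem_nonunits_iff_mem_mSet : x ∈ (laurentIntegers k).nonunits ↔ x ∈ mSet k := by
  have mem_nonunits_of_mem {x : LaurentSeries k} (hx : x ∈ mSet k) :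
      x ∈ (laurentIntegers k).nonunits := by
    obtain ⟨y, hy, rfl⟩ := hx
    rw [mul_comm]
    exact mul_mem_nonunits (mem_laurentIntegers_iff.2 hy) eps_mem_nonunits
  refine ⟨fun hx ↦ ?_, mem_nonunits_of_mem⟩
  obtain ⟨c, hc⟩ := exists_sub_C_mem_mSet
    (mem_laurentIntegers_iff.1 ((laurentIntegers k).nonunits_subset hx))
  have hC : (HahnSeries.C c : LaurentSeries k) ∈ (laurentIntegers k).nonunits := by
    simpa only [sub_sub_cancel] using sub_mem hx (mem_nonunits_of_mem hc)
  have hc0 : c = 0 := by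
    by_contra h
    exact ((ValuationSubring.mem_nonunits_iff _).1 hC).ne (valuation_C_eq_one h)
  rwa [hc0, map_zero, sub_zero] at hc

variable {D a : ℕ} {Q : LinearMap.BilinForm (LaurentSeries k) (Fin D → LaurentSeries k)}
  {L M N : Submodule (laurentIntegers k) (Fin D → LaurentSeries k)}

theorem IsLat.exists_isLattice {L : Set (Fin D → LaurentSeries k)} (hL : IsLat L) :
    ∃ L' : Submodule (laurentIntegers k) (Fin D → LaurentSeries k),
      L'.IsLattice (LaurentSeries k) ∧ (L' : Set (Fin D → LaurentSeries k)) = L := by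
  obtain ⟨b, hb, rfl⟩ := hL
  refine ⟨Submodule.span _ (Set.range b), ⟨Submodule.fg_span (Set.finite_range b), ?_⟩,
    Set.ext fun v ↦ ?_⟩
  · rw [Submodule.span_span_of_tower]
    exact hb.span_eq_top_of_card_eq_finrank' (by simp)
  · simp only [SetLike.mem_coe, Submodule.mem_span_range_iff_exists_fun, Set.mem_ofPred_eq,
      ← mem_laurentIntegers_iff]
    exact ⟨fun ⟨c, hc⟩ ↦ ⟨fun i ↦ c i, fun i ↦ (c i).2, hc.symm⟩,
      fun ⟨c, hcO, hc⟩ ↦ ⟨fun i ↦ ⟨c i, hcO i⟩, hc.symm⟩⟩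

theorem coe_maximalIdeal_smul :
    (↑(IsLocalRing.maximalIdeal (laurentIntegers k) • L) : Set (Fin D → LaurentSeries k)) =
      (fun v ↦ eps k • v) '' L := by
  refine Set.Subset.antisymm (fun v hv ↦ ?_) ?_
  · refine Submodule.smul_induction_on hv (fun c hc y hy ↦ ?_) ?_
    · obtain ⟨z, hz, hcz⟩ := mem_nonunits_iff_mem_mSet.1
        ((laurentIntegers k).coe_mem_nonunits_iff.2 hc)
      refine ⟨z • y, smul_mem_of_mem (mem_laurentIntegers_iff.2 hz) hy, ?_⟩
      change eps k • z • y = (c : LaurentSeries k) • y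
      rw [hcz, mul_smul]
    · rintro _ _ ⟨y, hy, rfl⟩ ⟨z, hz, rfl⟩
      exact ⟨y + z, L.add_mem hy hz, smul_add ..⟩
  · rintro _ ⟨y, hy, rfl⟩
    exact smul_mem_maximalIdeal_smul eps_mem_nonunits hy

theorem dualSubmodule_eq_of_eq_sharp (h : (L : Set (Fin D → LaurentSeries k)) = sharp Q L) :
    Q.dualSubmodule L = L := by
  ext v
  rw [← SetLike.mem_coe (p := L), h]
  simp [sharp, LinearMap.BilinForm.mem_dualSubmodule, Submodule.mem_one,
    Algebra.algebraMap_ofSubsemiring_apply, ← mem_laurentIntegers_iff]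

theorem IsQuotBasis.length_quotient (hN : IsLocalRing.maximalIdeal (laurentIntegers k) • M ≤ N)
    {w : Fin a → Fin D → LaurentSeries k}
    (hw : IsQuotBasis (N : Set (Fin D → LaurentSeries k)) M w) :
    Module.length (laurentIntegers k) (M ⧸ N.submoduleOf M) = a := by
  obtain ⟨hwM, hspan, hker⟩ := hw
  have sum_mem_of_forall_mem {d : Fin a → LaurentSeries k}
      (hd : ∀ i, d i ∈ (laurentIntegers k).nonunits) : ∑ i, d i • w i ∈ N :=
    N.sum_mem fun i _ ↦ hN (smul_mem_maximalIdeal_smul (hd i) (hwM i))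
  rw [← Fintype.card_fin a]
  refine length_quotient_eq_card hwM (fun x hx ↦ ?_) fun c ↦ ⟨fun hc ↦ ?_, fun hc ↦ ?_⟩
  · obtain ⟨c, hc⟩ := hspan x hx
    exact ⟨fun i ↦ ⟨_, C_mem_laurentIntegers (c i)⟩, hc⟩
  · choose r hr using fun i ↦ exists_sub_C_mem_mSet (mem_laurentIntegers_iff.1 (c i).2)
    have smul_eq (i : Fin a) : (HahnSeries.C (r i) : LaurentSeries k) • w i =
        c i • w i - ((c i : LaurentSeries k) - HahnSeries.C (r i)) • w i := by
      change _ = (c i : LaurentSeries k) • w i - _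
      rw [← sub_smul, sub_sub_cancel]
    have hr0 : r = 0 := hker r <| by
      simpa only [smul_eq, Finset.sum_sub_distrib, SetLike.mem_coe] using N.sub_mem hc
        (sum_mem_of_forall_mem fun i ↦ mem_nonunits_iff_mem_mSet.2 (hr i))
    intro i
    rw [← (laurentIntegers k).coe_mem_nonunits_iff, mem_nonunits_iff_mem_mSet]
    simpa [hr0] using hr i
  · exact sum_mem_of_forall_mem fun i ↦ (laurentIntegers k).coe_mem_nonunits_iff.2 (hc i)

end LaurentSeries

/-- let `L, M` be `o`-lattices with `εL ⊆ M ⊆ L = L^♯`, `Q(M,M) ⊆ m` and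
`dim_k(M/εL) = a`.  Then there is an `o`-basis `v_1, …, v_D` of `L` with
`Q(v_i,v_j) = δ_{i,D+1-j}` such that `v_1, …, v_a, εv_{a+1}, …, εv_D` is an `o`-basis
of `M`. -/
theorem affine_extend_basis {k : Type*} [Field k] [Fintype k]
    (hchar : ringChar k ≠ 2) {D : ℕ} (hD : 0 < D)
    (Q : LinearMap.BilinForm (LaurentSeries k) (Fin D → LaurentSeries k))
    (hsymm : ∀ x y, Q x y = Q y x)
    (hgram : ∀ i j, Q (Pi.single i 1) (Pi.single j 1) =
      if (i : ℕ) + (j : ℕ) = D - 1 then 1 else 0)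
    (L M : Set (Fin D → LaurentSeries k)) (hL : IsLat L) (hM : IsLat M)
    (hself : L = sharp Q L)
    (h1 : (fun v => eps k • v) '' L ⊆ M) (h2 : M ⊆ L)
    (hMM : ∀ x ∈ M, ∀ y ∈ M, Q x y ∈ mSet k)
    (a : ℕ) (ha : ∃ w : Fin a → (Fin D → LaurentSeries k),
      IsQuotBasis ((fun v => eps k • v) '' L) M w) :
    ∃ b : Fin D → (Fin D → LaurentSeries k),
      (∀ i j, Q (b i) (b j) = if (i : ℕ) + (j : ℕ) = D - 1 then 1 else 0) ∧
      L = {v | ∃ c : Fin D → LaurentSeries k, (∀ i, c i ∈ Oset k) ∧ v = ∑ i, c i • b i} ∧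
      M = {v | ∃ c : Fin D → LaurentSeries k, (∀ i, c i ∈ Oset k) ∧
        (∀ i : Fin D, a ≤ (i : ℕ) → c i ∈ mSet k) ∧ v = ∑ i, c i • b i} := by
  obtain ⟨L, _, rfl⟩ := hL.exists_isLattice
  obtain ⟨M, -, rfl⟩ := hM.exists_isLattice
  obtain ⟨w, hw⟩ := ha
  rw [← coe_maximalIdeal_smul] at h1 hw
  simp only [← mem_laurentIntegers_iff, ← mem_nonunits_iff_mem_mSet, ← isSplit_iff_val_add_val]
    at hMM ⊢
  have hsplit : IsSplit Q (Pi.basisFun (LaurentSeries k) (Fin D)) :=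
    isSplit_iff_val_add_val.2 fun i j ↦ by simpa only [Pi.basisFun_apply] using hgram i j
  exact affine_extend_basis_general _ hsplit ⟨hsymm⟩ (valuation_two_eq_one hchar)
    (dualSubmodule_eq_of_eq_sharp hself) h1 h2 hMM
    (hw.length_quotient (smul_mono_right _ h2))
end
end

section
/- Let Z = {(M, L) | M^∗ = M, L^♯ = L, εL ⊆ M ⊆ L} be the set of pairs of lattices in V. Suppose (M₀, L₀), (M, L) ∈ Z satisfy dim(M/(M ∩ M₀)) + dim(L/(L ∩ L₀)) = 1. Then for every (M′, L′) ∈ Z, the quantity dim(M′/(M′∩M₀)) + dim(M′/(M′∩M)) + dim(L′/(L′∩L₀)) + dim(L′/(L′∩L)) is odd. -/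
noncomputable section

open scoped Classical

/-- Membership in `Z = {(M, L) | M^∗ = M, L^♯ = L, εL ⊆ M ⊆ L}`. -/
def InZ {k : Type*} [Field k] {D : ℕ}
    (Q : LinearMap.BilinForm (LaurentSeries k) (Fin D → LaurentSeries k))
    (M L : Set (Fin D → LaurentSeries k)) : Prop :=
  IsLat M ∧ IsLat L ∧ mstar Q M = M ∧ sharp Q L = L ∧
    (fun v => eps k • v) '' L ⊆ M ∧ M ⊆ L

/-!
For an `o`-lattice `L`, the dual `L^♯` is the orthogonal complement of `L` for the `k`-bilinear form
`res Q`, and `M^∗` is the dual `M^♯` for the form `ε⁻¹Q`. So it is enough to see that for subspaces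
`A`, `B`, `C` of a symmetric space over `k`, each equal to its orthogonal complement, the sum
`dim A/(A ∩ B) + dim A/(A ∩ C) + dim C/(C ∩ B)` is even. In the finite-dimensional nondegenerate
case Wall's form `(b + c, b' + c') ↦ Q(b, c')` on `A ∩ (B + C)` is alternating with kernel
`A ∩ B + A ∩ C`, so these two spaces have dimensions of the same parity, which is a restatement of
the claim. In general `A ∩ B ∩ C` is the radical of `A + B + C`, and any complement of it in
`A + B + C` is finite-dimensional and nondegenerate, with the same relative codimensions. Now apply
this to `(M', M₀, M)` and to `(L', L₀, L)`, and add.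
-/

open Module

section AlternatingForms

variable {k V : Type*} [Field k] [NeZero (2 : k)] [AddCommGroup V] [Module k V]
  [FiniteDimensional k V] {ω : LinearMap.BilinForm k V}

lemma even_finrank_of_isAlt_of_nondegenerate (hω : ω.IsAlt) (hnd : ω.Nondegenerate) :
    Even (finrank k V) := by
  let b := finBasis k V
  let G := LinearMap.BilinForm.toMatrix b ω
  have hG : G.det ≠ 0 := (LinearMap.BilinForm.nondegenerate_iff_det_ne_zero b).1 hnd
  have hskew : G.transpose = -G := by
    ext i j
    simp [G, LinearMap.BilinForm.toMatrix_apply, hω.neg_eq]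
  have hdet : G.det = (-1) ^ finrank k V * G.det := by
    simpa [Matrix.det_neg] using congrArg Matrix.det hskew
  by_contra hodd
  rw [(Nat.not_even_iff_odd.1 hodd).neg_one_pow, neg_one_mul, eq_neg_iff_add_eq_zero,
    ← two_mul] at hdet
  exact mul_ne_zero two_ne_zero hG hdet

lemma even_finrank_add_finrank_ker_of_isAlt (hω : ω.IsAlt) :
    Even (finrank k V + finrank k (LinearMap.ker ω)) := by
  obtain ⟨U, hU⟩ := Submodule.exists_isCompl (LinearMap.ker ω)
  have hker : LinearMap.ker (ω.restrict U) = ⊥ := by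
    rw [LinearMap.BilinForm.ker_restrict_eq_of_codisjoint hU.symm.codisjoint
        fun x _ y hy ↦ hω.isRefl y x (LinearMap.congr_fun hy x),
      ← Submodule.disjoint_iff_comap_eq_bot]
    exact hU.symm.disjoint
  have halt : (ω.restrict U).IsAlt := fun x ↦ hω x
  have hnd : (ω.restrict U).Nondegenerate :=
    halt.isRefl.nondegenerate_iff_separatingLeft.2 (LinearMap.separatingLeft_iff_ker_eq_bot.2 hker)
  have heven := even_finrank_of_isAlt_of_nondegenerate halt hnd
  have hsum := Submodule.finrank_add_eq_of_isCompl hU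
  grind

end AlternatingForms

section Orthogonal

lemma orthogonal_sup {R M : Type*} [CommSemiring R] [AddCommMonoid M] [Module R M]
    (Q : LinearMap.BilinForm R M) (A B : Submodule R M) :
    Q.orthogonal (A ⊔ B) = Q.orthogonal A ⊓ Q.orthogonal B := by
  refine le_antisymm (le_inf (LinearMap.BilinForm.orthogonal_le le_sup_left)
    (LinearMap.BilinForm.orthogonal_le le_sup_right)) ?_
  rintro x ⟨hxA, hxB⟩ y hy
  obtain ⟨a, ha, b, hb, rfl⟩ := Submodule.mem_sup.1 hy
  have haQ : Q a x = 0 := hxA a ha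
  have hbQ : Q b x = 0 := hxB b hb
  simp [haQ, hbQ]

variable {k V : Type*} [Field k] [AddCommGroup V] [Module k V] {Q : LinearMap.BilinForm k V}

lemma orthogonal_inf [FiniteDimensional k V] (hnd : Q.Nondegenerate) (hQ : Q.IsRefl)
    (A B : Submodule k V) :
    Q.orthogonal (A ⊓ B) = Q.orthogonal A ⊔ Q.orthogonal B := by
  rw [← LinearMap.BilinForm.orthogonal_orthogonal hnd hQ (Q.orthogonal A ⊔ Q.orthogonal B),
    orthogonal_sup, LinearMap.BilinForm.orthogonal_orthogonal hnd hQ,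
    LinearMap.BilinForm.orthogonal_orthogonal hnd hQ]

lemma two_mul_finrank_of_orthogonal_eq_self [FiniteDimensional k V] (hnd : Q.Nondegenerate)
    {A : Submodule k V} (hA : Q.orthogonal A = A) : 2 * finrank k A = finrank k V := by
  have hrank := LinearMap.BilinForm.finrank_orthogonal hnd A
  have hle := Submodule.finrank_le A
  rw [hA] at hrank
  omega

lemma finiteDimensional_of_orthogonal_eq_self {A : Submodule k V} [FiniteDimensional k A]
    (hA : Q.orthogonal A = A) : FiniteDimensional k V := by
  let r : V →ₗ[k] Dual k A := (Q.domRestrict A).flip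
  have hker : LinearMap.ker r = A := by
    refine Eq.trans ?_ hA
    ext x
    simp [r, LinearMap.ext_iff, LinearMap.BilinForm.mem_orthogonal_iff]
  have : FiniteDimensional k (V ⧸ A) := hker ▸ Module.Finite.equiv r.quotKerEquivRange.symm
  exact Module.Finite.of_submodule_quotient A

-- `W` is a complement of the radical `S^⊥` of `Q` in `S`.
lemma exists_nondegenerate_restrict_of_orthogonal_le (hQ : Q.IsRefl) {S : Submodule k V}
    (hS : Q.orthogonal S ≤ S) :
    ∃ W : Submodule k V, (Q.restrict W).Nondegenerate ∧ Disjoint (Q.orthogonal S) W ∧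
      W ≤ Q.orthogonal (Q.orthogonal S) ∧
      ∀ D, Q.orthogonal S ≤ D → D ≤ S → Q.orthogonal S ⊔ D ⊓ W = D := by
  obtain ⟨U, hU⟩ := Submodule.exists_isCompl (Q.orthogonal S)
  have hdisj : Disjoint (Q.orthogonal S) (S ⊓ U) := hU.disjoint.mono_right inf_le_right
  have hbiorth : S ⊓ U ≤ Q.orthogonal (Q.orthogonal S) :=
    inf_le_left.trans (LinearMap.BilinForm.le_orthogonal_orthogonal hQ)
  have hsplit : ∀ D, Q.orthogonal S ≤ D → D ≤ S → Q.orthogonal S ⊔ D ⊓ (S ⊓ U) = D := by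
    intro D hSD hDS
    rw [← inf_assoc, inf_eq_left.2 hDS, inf_comm, ← sup_inf_assoc_of_le U hSD, hU.sup_eq_top,
      top_inf_eq]
  refine ⟨S ⊓ U, LinearMap.BilinForm.nondegenerate_restrict_of_disjoint_orthogonal Q hQ ?_,
    hdisj, hbiorth, hsplit⟩
  suffices (S ⊓ U) ⊓ Q.orthogonal (S ⊓ U) ≤ Q.orthogonal S from
    disjoint_iff_inf_le.2 ((le_inf this inf_le_left).trans hdisj.le_bot)
  calc (S ⊓ U) ⊓ Q.orthogonal (S ⊓ U)
      ≤ Q.orthogonal (Q.orthogonal S) ⊓ Q.orthogonal (S ⊓ U) := inf_le_inf_right _ hbiorth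
    _ = Q.orthogonal (Q.orthogonal S ⊔ S ⊓ (S ⊓ U)) := by
      rw [orthogonal_sup, inf_eq_right.2 (inf_le_left : S ⊓ U ≤ S)]
    _ = Q.orthogonal S := by rw [hsplit S hS le_rfl]

lemma orthogonal_comap_subtype_eq_self {D W X : Submodule k V} (hD : Q.orthogonal D = D)
    (hXW : W ≤ Q.orthogonal X) (hsplit : X ⊔ D ⊓ W = D) :
    (Q.restrict W).orthogonal (D.comap W.subtype) = D.comap W.subtype := by
  ext x
  have hxX : (x : V) ∈ Q.orthogonal X := hXW x.2
  have hx : (x : V) ∈ D ↔ (x : V) ∈ Q.orthogonal (D ⊓ W) := by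
    conv_lhs => rw [← hD, ← hsplit, orthogonal_sup, Submodule.mem_inf, and_iff_right hxX]
  rw [Submodule.mem_comap, Submodule.subtype_apply, hx]
  exact ⟨fun h y hy ↦ h ⟨y, hy.2⟩ hy.1, fun h y hy ↦ h y ⟨hy, y.2⟩⟩

end Orthogonal

section RelativeCodimension

variable {k V : Type*} [Field k] [AddCommGroup V] [Module k V]

/-- The codimension of `A ∩ B` in `A`, written `dim A/(A ∩ B)` on paper: `B.submoduleOf A` is
`A ∩ B` viewed inside `A`. It is `0` when this codimension is infinite. -/
def codimIn (A B : Submodule k V) : ℕ :=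
  finrank k (A ⧸ B.submoduleOf A)

lemma codimIn_add_finrank_inf (A B : Submodule k V) [FiniteDimensional k A] :
    codimIn A B + finrank k ↥(A ⊓ B) = finrank k A := by
  have hinf : finrank k (B.submoduleOf A) = finrank k ↥(A ⊓ B) := by
    rw [← Submodule.finrank_map_subtype_eq, Submodule.submoduleOf, Submodule.map_comap_subtype]
  rw [← hinf]
  exact Submodule.finrank_quotient_add_finrank _

/-- The isomorphism `f⁻¹A / (f⁻¹A ∩ f⁻¹B) ≃ A / (A ∩ B)` induced by a linear map `f` whose range
meets every class; it transports relative codimensions to subspaces. -/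
def quotientComapEquiv {U : Type*} [AddCommGroup U] [Module k U] (f : U →ₗ[k] V)
    {A B : Submodule k V} (h : A ≤ B ⊔ A ⊓ LinearMap.range f) :
    (A.comap f ⧸ (B.comap f).submoduleOf (A.comap f)) ≃ₗ[k] A ⧸ B.submoduleOf A :=
  let g : A.comap f →ₗ[k] A ⧸ B.submoduleOf A :=
    (B.submoduleOf A).mkQ ∘ₗ f.restrict fun _ hx ↦ hx
  have hker : LinearMap.ker g = (B.comap f).submoduleOf (A.comap f) := by
    rw [LinearMap.ker_comp, Submodule.ker_mkQ]
    rfl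
  have hsurj : Function.Surjective g := by
    intro q
    obtain ⟨⟨x, hxA⟩, rfl⟩ := Submodule.mkQ_surjective _ q
    obtain ⟨b, hb, _, ⟨hfA, u, rfl⟩, hsum⟩ := Submodule.mem_sup.1 (h hxA)
    refine ⟨⟨u, hfA⟩, (Submodule.Quotient.eq _).2 ?_⟩
    simpa [Submodule.submoduleOf, ← hsum] using hb
  (Submodule.quotEquivOfEq _ _ hker.symm).trans (g.quotKerEquivOfSurjective hsurj)

lemma finiteDimensional_of_inf_eq_bot {A B C : Submodule k V} (h : A ⊓ B ⊓ C = ⊥)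
    [FiniteDimensional k (A ⧸ B.submoduleOf A)] [FiniteDimensional k (A ⧸ C.submoduleOf A)] :
    FiniteDimensional k A := by
  refine Module.Finite.of_injective ((B.submoduleOf A).mkQ.prod (C.submoduleOf A).mkQ) ?_
  rw [← LinearMap.ker_eq_bot, LinearMap.ker_prod, Submodule.ker_mkQ, Submodule.ker_mkQ, eq_bot_iff]
  rintro x ⟨hxB, hxC⟩
  have hx : (x : V) ∈ A ⊓ B ⊓ C := ⟨⟨x.2, hxB⟩, hxC⟩
  simpa [h] using hx

end RelativeCodimension

section WallForm

variable {k V : Type*} [Field k] [AddCommGroup V] [Module k V] {Q : LinearMap.BilinForm k V}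
  {A B C : Submodule k V} {β : ↥(B ⊔ C) →ₗ[k] V}

lemma exists_linearMap_mem_and_sub_mem (B C : Submodule k V) :
    ∃ β : ↥(B ⊔ C) →ₗ[k] V, ∀ x, β x ∈ B ∧ (x : V) - β x ∈ C := by
  let s : B × C →ₗ[k] V := B.subtype.coprod C.subtype
  have hs : LinearMap.range s = B ⊔ C := by
    simp [s, LinearMap.range_coprod]
  obtain ⟨σ, hσ⟩ := s.rangeRestrict.exists_rightInverse_of_surjective s.range_rangeRestrict
  have hadd : ∀ x, ((σ x).1 : V) + (σ x).2 = x := fun x ↦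
    congrArg Subtype.val (LinearMap.congr_fun hσ x)
  rw [← hs]
  refine ⟨B.subtype ∘ₗ LinearMap.fst k B C ∘ₗ σ, fun x ↦ ⟨(σ x).1.2, ?_⟩⟩
  convert (σ x).2.2
  exact sub_eq_of_eq_add' (hadd x).symm

/-- Wall's form `(b + c, b' + c') ↦ Q(b, c')` on `A ∩ (B + C)`, which measures the relative position
of three self-orthogonal subspaces. The map `β` selects the component `b ∈ B` of `b + c`; since
`Q(b, b') = 0`, the value is computed as `Q(b, b' + c')`. -/
def wallForm (Q : LinearMap.BilinForm k V) (A : Submodule k V) (β : ↥(B ⊔ C) →ₗ[k] V) :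
    LinearMap.BilinForm k ↥(A ⊓ (B ⊔ C)) :=
  Q.compl₁₂ (β ∘ₗ Submodule.inclusion inf_le_right) (A ⊓ (B ⊔ C)).subtype

lemma isAlt_wallForm [NeZero (2 : k)] (hQ : Q.IsSymm) (hA : Q.orthogonal A = A)
    (hB : Q.orthogonal B = B) (hC : Q.orthogonal C = C)
    (hβ : ∀ x, β x ∈ B ∧ (x : V) - β x ∈ C) : (wallForm Q A β).IsAlt := by
  intro a
  have isotropic : ∀ {D : Submodule k V}, Q.orthogonal D = D → ∀ {x}, x ∈ D → Q x x = 0 :=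
    fun hD x hx ↦ hD.ge hx x hx
  set b := β (Submodule.inclusion inf_le_right a)
  obtain ⟨hb, hc⟩ := hβ (Submodule.inclusion inf_le_right a)
  have haa : Q (a : V) a = 0 := isotropic hA a.2.1
  have hbb : Q b b = 0 := isotropic hB hb
  have hcc : Q ((a : V) - b) (a - b) = 0 := isotropic hC hc
  have hba : 2 * Q b a = 0 := by
    simp only [map_sub, LinearMap.sub_apply, haa, hbb, hQ.eq (a : V) b] at hcc
    linear_combination -hcc
  exact (mul_eq_zero.1 hba).resolve_left two_ne_zero

lemma ker_wallForm [FiniteDimensional k V] (hnd : Q.Nondegenerate) (hQ : Q.IsSymm)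
    (hA : Q.orthogonal A = A) (hB : Q.orthogonal B = B) (hC : Q.orthogonal C = C)
    (hβ : ∀ x, β x ∈ B ∧ (x : V) - β x ∈ C) :
    LinearMap.ker (wallForm Q A β) = (A ⊓ B ⊔ A ⊓ C).submoduleOf (A ⊓ (B ⊔ C)) := by
  have horth : Q.orthogonal (A ⊓ (B ⊔ C)) = A ⊔ B ⊓ C := by
    rw [orthogonal_inf hnd hQ.isRefl, orthogonal_sup, hA, hB, hC]
  ext x
  set b := β (Submodule.inclusion inf_le_right x)
  obtain ⟨hb, hc⟩ := hβ (Submodule.inclusion inf_le_right x)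
  have hker : x ∈ LinearMap.ker (wallForm Q A β) ↔ b ∈ A ⊔ B ⊓ C := by
    rw [← horth]
    refine ⟨fun h y hy ↦ hQ.isRefl _ _ (LinearMap.congr_fun h ⟨y, hy⟩), fun h ↦ ?_⟩
    ext y
    exact hQ.isRefl _ _ (h y y.2)
  rw [hker]
  constructor
  · intro h
    obtain ⟨a, ha, e, ⟨heB, heC⟩, hae⟩ := Submodule.mem_sup.1 h
    have haB : a ∈ B := by
      rw [eq_sub_of_add_eq hae]
      exact sub_mem hb heB
    have hxaC : (x : V) - a ∈ C := by
      rw [eq_sub_of_add_eq hae, sub_sub_eq_add_sub, add_sub_right_comm]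
      exact add_mem hc heC
    exact Submodule.mem_sup.2 ⟨a, ⟨ha, haB⟩, x - a, ⟨sub_mem x.2.1 ha, hxaC⟩, add_sub_cancel _ _⟩
  · intro h
    obtain ⟨y, ⟨hyA, hyB⟩, z, ⟨-, hzC⟩, hyz⟩ := Submodule.mem_sup.1 h
    have hbyC : b - y ∈ C := by
      have hby : b - y = z - (x - b) := by
        rw [← show y + z = x from hyz]
        abel
      rw [hby]
      exact sub_mem hzC hc
    exact Submodule.mem_sup.2 ⟨y, hyA, b - y, ⟨sub_mem hb hyB, hbyC⟩, add_sub_cancel _ _⟩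

end WallForm

section Parity

variable {k V : Type*} [Field k] [NeZero (2 : k)] [AddCommGroup V] [Module k V]
  {Q : LinearMap.BilinForm k V} {A B C : Submodule k V}

lemma even_finrank_inf_sup_add_finrank_sup_inf [FiniteDimensional k V] (hnd : Q.Nondegenerate)
    (hQ : Q.IsSymm) (hA : Q.orthogonal A = A) (hB : Q.orthogonal B = B)
    (hC : Q.orthogonal C = C) :
    Even (finrank k ↥(A ⊓ (B ⊔ C)) + finrank k ↥(A ⊓ B ⊔ A ⊓ C)) := by
  obtain ⟨β, hβ⟩ := exists_linearMap_mem_and_sub_mem B C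
  have heven := even_finrank_add_finrank_ker_of_isAlt (isAlt_wallForm hQ hA hB hC hβ)
  rwa [ker_wallForm hnd hQ hA hB hC hβ,
    (Submodule.submoduleOfEquivOfLe le_inf_sup).finrank_eq] at heven

lemma even_codimIn_add_of_nondegenerate [FiniteDimensional k V] (hnd : Q.Nondegenerate)
    (hQ : Q.IsSymm) (hA : Q.orthogonal A = A) (hB : Q.orthogonal B = B)
    (hC : Q.orthogonal C = C) : Even (codimIn A B + codimIn A C + codimIn C B) := by
  have heven := even_finrank_inf_sup_add_finrank_sup_inf hnd hQ hA hB hC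
  have hAV := two_mul_finrank_of_orthogonal_eq_self hnd hA
  have hCV := two_mul_finrank_of_orthogonal_eq_self hnd hC
  have horth : finrank k V - finrank k ↥(A ⊓ (B ⊔ C)) = finrank k ↥(A ⊔ B ⊓ C) := by
    rw [← LinearMap.BilinForm.finrank_orthogonal hnd, orthogonal_inf hnd hQ.isRefl, orthogonal_sup,
      hA, hB, hC]
  have hle := Submodule.finrank_le (A ⊓ (B ⊔ C))
  have hsup := Submodule.finrank_sup_add_finrank_inf_eq A (B ⊓ C)
  have hinf := Submodule.finrank_sup_add_finrank_inf_eq (A ⊓ B) (A ⊓ C)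
  rw [← inf_inf_distrib_left] at hinf
  have hAB := codimIn_add_finrank_inf A B
  have hAC := codimIn_add_finrank_inf A C
  have hCB := codimIn_add_finrank_inf C B
  rw [inf_comm C B] at hCB
  grind

theorem even_codimIn_add (hQ : Q.IsSymm) (hA : Q.orthogonal A = A) (hB : Q.orthogonal B = B)
    (hC : Q.orthogonal C = C) [FiniteDimensional k (A ⧸ B.submoduleOf A)]
    [FiniteDimensional k (A ⧸ C.submoduleOf A)] :
    Even (codimIn A B + codimIn A C + codimIn C B) := by
  let S := A ⊔ B ⊔ C
  have hAS : A ≤ S := le_sup_left.trans le_sup_left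
  have hBS : B ≤ S := le_sup_right.trans le_sup_left
  have hCS : C ≤ S := le_sup_right
  have hX : Q.orthogonal S = A ⊓ B ⊓ C := by
    rw [orthogonal_sup, orthogonal_sup, hA, hB, hC]
  have hXA : Q.orthogonal S ≤ A := hX.trans_le (inf_le_left.trans inf_le_left)
  have hXB : Q.orthogonal S ≤ B := hX.trans_le (inf_le_left.trans inf_le_right)
  have hXC : Q.orthogonal S ≤ C := hX.trans_le inf_le_right
  obtain ⟨W, hnd, hdisj, hXW, hsplit⟩ :=
    exists_nondegenerate_restrict_of_orthogonal_le hQ.isRefl (hXA.trans hAS)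
  have trace_orthogonal {D : Submodule k V} (hD : Q.orthogonal D = D) (hXD : Q.orthogonal S ≤ D)
      (hDS : D ≤ S) : (Q.restrict W).orthogonal (D.comap W.subtype) = D.comap W.subtype :=
    orthogonal_comap_subtype_eq_self hD hXW (hsplit D hXD hDS)
  have traceEquiv {D E : Submodule k V} (hXD : Q.orthogonal S ≤ D) (hDS : D ≤ S)
      (hXE : Q.orthogonal S ≤ E) :=
    quotientComapEquiv W.subtype (A := D) (B := E) (by
      rw [Submodule.range_subtype]
      exact (hsplit D hXD hDS).ge.trans (sup_le_sup_right hXE _))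
  have hbot : A.comap W.subtype ⊓ B.comap W.subtype ⊓ C.comap W.subtype = ⊥ := by
    rw [← Submodule.comap_inf, ← Submodule.comap_inf, ← hX]
    exact Submodule.disjoint_iff_comap_eq_bot.1 hdisj.symm
  have := (traceEquiv hXA hAS hXB).symm.finiteDimensional
  have := (traceEquiv hXA hAS hXC).symm.finiteDimensional
  have := finiteDimensional_of_inf_eq_bot hbot
  have := finiteDimensional_of_orthogonal_eq_self (trace_orthogonal hA hXA hAS)
  have heven := even_codimIn_add_of_nondegenerate hnd (hQ.restrict W)
    (trace_orthogonal hA hXA hAS) (trace_orthogonal hB hXB hBS) (trace_orthogonal hC hXC hCS)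
  rwa [codimIn, codimIn, codimIn, (traceEquiv hXA hAS hXB).finrank_eq,
    (traceEquiv hXA hAS hXC).finrank_eq, (traceEquiv hXC hCS hXB).finrank_eq] at heven

end Parity

section SelfDualLattices

variable {k : Type*} [Field k]

-- Instance search takes the `k`-algebra structure of `k((ε))` from `HahnSeries.powerSeriesAlgebra`,
-- whose scalar action is not syntactically that of `HahnSeries.instModule`.
instance isScalarTower_laurentSeries : IsScalarTower k (LaurentSeries k) (LaurentSeries k) :=
  ⟨fun _ _ _ ↦ by simp only [← HahnSeries.C_mul_eq_smul, smul_eq_mul, mul_assoc]⟩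

lemma C_smul_eq_smul {ι : Type*} (c : k) (v : ι → LaurentSeries k) :
    (HahnSeries.C c : LaurentSeries k) • v = c • v :=
  funext fun _ ↦ HahnSeries.C_mul_eq_smul

lemma mem_Oset_iff {y : LaurentSeries k} : y ∈ Oset k ↔ ∀ n < 0, y.coeff n = 0 := by
  rw [← LaurentSeries.valuation_le_iff_coeff_lt_eq_zero k]
  exact (LaurentSeries.val_le_one_iff_eq_coe k y).symm

lemma mem_mSet_iff {y : LaurentSeries k} : y ∈ mSet k ↔ (eps k)⁻¹ * y ∈ Oset k := by
  have heps : eps k ≠ 0 := HahnSeries.single_ne_zero one_ne_zero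
  constructor
  · rintro ⟨z, hz, rfl⟩
    rwa [inv_mul_cancel_left₀ heps]
  · exact fun hy ↦ ⟨_, hy, (mul_inv_cancel_left₀ heps y).symm⟩

variable {D : ℕ} (Q : LinearMap.BilinForm (LaurentSeries k) (Fin D → LaurentSeries k))

lemma mstar_eq_sharp_smul (M : Set (Fin D → LaurentSeries k)) :
    mstar Q M = sharp ((eps k)⁻¹ • Q) M :=
  Set.ext fun _ ↦ forall₂_congr fun _ _ ↦ mem_mSet_iff

lemma smul_mem_sharp {L : Set (Fin D → LaurentSeries k)} {y : LaurentSeries k} (hy : y ∈ Oset k)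
    {v : Fin D → LaurentSeries k} (hv : v ∈ sharp Q L) : y • v ∈ sharp Q L := by
  intro x hx
  rw [LinearMap.map_smul₂]
  exact mul_mem (s := (HahnSeries.ofPowerSeries ℤ k).range) hy (hv x hx)

/-- The dual lattice `L^♯` as a `k`-subspace. -/
def sharpSubmodule (L : Set (Fin D → LaurentSeries k)) :
    Submodule k (Fin D → LaurentSeries k) where
  carrier := sharp Q L
  zero_mem' x _ := by
    rw [LinearMap.map_zero₂]
    exact zero_mem (HahnSeries.ofPowerSeries ℤ k).range
  add_mem' hv hw x hx := by
    rw [LinearMap.map_add₂]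
    exact add_mem (S := Subring (LaurentSeries k)) (s := (HahnSeries.ofPowerSeries ℤ k).range)
      (hv x hx) (hw x hx)
  smul_mem' c _ hv := by
    rw [← C_smul_eq_smul]
    exact smul_mem_sharp Q ⟨PowerSeries.C c, HahnSeries.ofPowerSeries_C c⟩ hv

/-- The `k`-bilinear form `(v, w) ↦ res Q(v, w)`, where `res` is the coefficient of `ε⁻¹`; lattices
that are self-dual for `Q` are their own orthogonal complements for it. -/
def residueForm : LinearMap.BilinForm k (Fin D → LaurentSeries k) :=
  (LinearMap.restrictScalars₁₂ k k Q).compr₂ (HahnSeries.coeff.linearMap (-1))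

variable {Q}

lemma isSymm_residueForm (hQ : Q.IsSymm) : (residueForm Q).IsSymm :=
  ⟨fun v w ↦ congrArg (HahnSeries.coeff · (-1)) (hQ.eq v w)⟩

lemma orthogonal_residueForm_of_sharp_eq_self (hQ : Q.IsSymm)
    {E : Submodule k (Fin D → LaurentSeries k)} (hE : sharp Q E = E) :
    (residueForm Q).orthogonal E = E := by
  ext v
  rw [← SetLike.mem_coe (p := E), ← hE]
  constructor
  · intro hv x hx
    refine mem_Oset_iff.2 fun n hn ↦ ?_
    have hshift : HahnSeries.single (-1 - n) (1 : k) • x ∈ sharp Q E :=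
      smul_mem_sharp Q (mem_Oset_iff.2 fun m hm ↦ HahnSeries.coeff_single_of_ne (by lia))
        (hE.ge hx)
    have hres : (Q (HahnSeries.single (-1 - n) (1 : k) • x) v).coeff (-1) = 0 := hv _ (hE.le hshift)
    rwa [LinearMap.map_smul₂, smul_eq_mul, HahnSeries.coeff_single_mul, one_mul, sub_sub_cancel,
      hQ.eq] at hres
  · intro hv x hx
    exact (isSymm_residueForm hQ).isRefl _ _ (mem_Oset_iff.1 (hv x hx) (-1) (by norm_num))

/-- The basis of `E / (E ∩ N)` whose representatives are the given vectors. -/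
def quotBasis {a : ℕ} {E N : Submodule k (Fin D → LaurentSeries k)}
    {w : Fin a → Fin D → LaurentSeries k} (hw : IsQuotBasis (E ∩ N : Set _) E w) :
    Basis (Fin a) k (E ⧸ N.submoduleOf E) :=
  let wE : Fin a → E := fun i ↦ ⟨w i, hw.1 i⟩
  have hcoe (c : Fin a → k) :
      ((∑ i, c i • wE i : E) : Fin D → LaurentSeries k) =
        ∑ i, (HahnSeries.C (c i) : LaurentSeries k) • w i := by
    simp only [wE, C_smul_eq_smul, Submodule.coe_sum, Submodule.coe_smul]
  have hli : LinearIndependent k ((N.submoduleOf E).mkQ ∘ wE) := by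
    refine Fintype.linearIndependent_iff.2 fun c hc ↦ congrFun (hw.2.2 c ?_)
    have hmem : ∑ i, c i • wE i ∈ N.submoduleOf E := by
      rwa [← Submodule.Quotient.mk_eq_zero, ← Submodule.mkQ_apply, map_sum]
    rw [← hcoe]
    exact ⟨Subtype.property _, hmem⟩
  have hspan : ⊤ ≤ Submodule.span k (Set.range ((N.submoduleOf E).mkQ ∘ wE)) := by
    rintro q -
    obtain ⟨x, rfl⟩ := Submodule.mkQ_surjective _ q
    obtain ⟨c, -, hc⟩ := hw.2.1 x x.2
    have hx : (N.submoduleOf E).mkQ x = ∑ i, c i • (N.submoduleOf E).mkQ (wE i) := by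
      simp_rw [← map_smul, ← map_sum]
      refine (Submodule.Quotient.eq _).2 ?_
      rwa [← hcoe] at hc
    rw [hx]
    exact (Submodule.mem_span_range_iff_exists_fun k).2 ⟨c, rfl⟩
  Basis.mk hli hspan

lemma even_add_of_sharp_eq_self [NeZero (2 : k)] (hQ : Q.IsSymm)
    {A B C : Set (Fin D → LaurentSeries k)}
    (hA : sharp Q A = A) (hB : sharp Q B = B) (hC : sharp Q C = C) {a b c : ℕ}
    {u : Fin a → Fin D → LaurentSeries k} {v : Fin b → Fin D → LaurentSeries k}
    {w : Fin c → Fin D → LaurentSeries k} (hu : IsQuotBasis (A ∩ B) A u)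
    (hv : IsQuotBasis (A ∩ C) A v) (hw : IsQuotBasis (C ∩ B) C w) : Even (a + b + c) := by
  obtain ⟨A, rfl⟩ : ∃ E : Submodule k _, ↑E = A := ⟨sharpSubmodule Q A, hA⟩
  obtain ⟨B, rfl⟩ : ∃ E : Submodule k _, ↑E = B := ⟨sharpSubmodule Q B, hB⟩
  obtain ⟨C, rfl⟩ : ∃ E : Submodule k _, ↑E = C := ⟨sharpSubmodule Q C, hC⟩
  have := Module.Finite.of_basis (quotBasis hu)
  have := Module.Finite.of_basis (quotBasis hv)
  have heven := even_codimIn_add (isSymm_residueForm hQ)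
    (orthogonal_residueForm_of_sharp_eq_self hQ hA) (orthogonal_residueForm_of_sharp_eq_self hQ hB)
    (orthogonal_residueForm_of_sharp_eq_self hQ hC)
  simpa only [codimIn, finrank_eq_card_basis (quotBasis hu), finrank_eq_card_basis (quotBasis hv),
    finrank_eq_card_basis (quotBasis hw), Fintype.card_fin] using heven

end SelfDualLattices

theorem odd_codimension_sum_general {k : Type*} [Field k] (hchar : ringChar k ≠ 2) {D : ℕ}
    {Q : LinearMap.BilinForm (LaurentSeries k) (Fin D → LaurentSeries k)} (hQ : Q.IsSymm)
    {M₀ L₀ M L M' L' : Set (Fin D → LaurentSeries k)}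
    (hM₀ : mstar Q M₀ = M₀) (hL₀ : sharp Q L₀ = L₀) (hM : mstar Q M = M) (hL : sharp Q L = L)
    (hM' : mstar Q M' = M') (hL' : sharp Q L' = L') {a b a₁ a₂ a₃ a₄ : ℕ}
    {w : Fin a → Fin D → LaurentSeries k} {w' : Fin b → Fin D → LaurentSeries k}
    {w₁ : Fin a₁ → Fin D → LaurentSeries k} {w₂ : Fin a₂ → Fin D → LaurentSeries k}
    {w₃ : Fin a₃ → Fin D → LaurentSeries k} {w₄ : Fin a₄ → Fin D → LaurentSeries k}
    (hab : Odd (a + b)) (hw : IsQuotBasis (M ∩ M₀) M w) (hw' : IsQuotBasis (L ∩ L₀) L w')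
    (hw₁ : IsQuotBasis (M' ∩ M₀) M' w₁) (hw₂ : IsQuotBasis (M' ∩ M) M' w₂)
    (hw₃ : IsQuotBasis (L' ∩ L₀) L' w₃) (hw₄ : IsQuotBasis (L' ∩ L) L' w₄) :
    Odd (a₁ + a₂ + a₃ + a₄) := by
  have : NeZero (2 : k) := ⟨Ring.two_ne_zero hchar⟩
  have hεQ : ((eps k)⁻¹ • Q).IsSymm := hQ.smul _
  rw [mstar_eq_sharp_smul] at hM₀ hM hM'
  have hevenM : Even (a₁ + a₂ + a) := even_add_of_sharp_eq_self hεQ hM' hM₀ hM hw₁ hw₂ hw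
  have hevenL : Even (a₃ + a₄ + b) := even_add_of_sharp_eq_self hQ hL' hL₀ hL hw₃ hw₄ hw'
  grind

/-- suppose `(M₀,L₀), (M,L) ∈ Z` satisfy
`dim M/(M∩M₀) + dim L/(L∩L₀) = 1`.  Then for every `(M',L') ∈ Z` the quantity
`dim M'/(M'∩M₀) + dim M'/(M'∩M) + dim L'/(L'∩L₀) + dim L'/(L'∩L)` is odd. -/
theorem odd_codimension_sum {k : Type*} [Field k] [Fintype k]
    (hchar : ringChar k ≠ 2) {d : ℕ}
    (Q : LinearMap.BilinForm (LaurentSeries k) (Fin (2 * d) → LaurentSeries k))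
    (hsymm : ∀ x y, Q x y = Q y x)
    (hgram : ∀ i j, Q (Pi.single i 1) (Pi.single j 1) =
      if (i : ℕ) + (j : ℕ) = 2 * d - 1 then 1 else 0)
    (M₀ L₀ M L : Set (Fin (2 * d) → LaurentSeries k))
    (h₀ : InZ Q M₀ L₀) (h : InZ Q M L)
    (hone : ∃ (a b : ℕ) (w : Fin a → (Fin (2 * d) → LaurentSeries k))
      (w' : Fin b → (Fin (2 * d) → LaurentSeries k)),
      a + b = 1 ∧ IsQuotBasis (M ∩ M₀) M w ∧ IsQuotBasis (L ∩ L₀) L w') :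
    ∀ M' L' : Set (Fin (2 * d) → LaurentSeries k), InZ Q M' L' →
      ∀ (a₁ a₂ a₃ a₄ : ℕ)
        (w₁ : Fin a₁ → (Fin (2 * d) → LaurentSeries k))
        (w₂ : Fin a₂ → (Fin (2 * d) → LaurentSeries k))
        (w₃ : Fin a₃ → (Fin (2 * d) → LaurentSeries k))
        (w₄ : Fin a₄ → (Fin (2 * d) → LaurentSeries k)),
        IsQuotBasis (M' ∩ M₀) M' w₁ → IsQuotBasis (M' ∩ M) M' w₂ →
        IsQuotBasis (L' ∩ L₀) L' w₃ → IsQuotBasis (L' ∩ L) L' w₄ →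
        Odd (a₁ + a₂ + a₃ + a₄) := by
  obtain ⟨a, b, w, w', hab, hw, hw'⟩ := hone
  intro M' L' h' a₁ a₂ a₃ a₄ w₁ w₂ w₃ w₄
  exact odd_codimension_sum_general hchar ⟨hsymm⟩ h₀.2.2.1 h₀.2.2.2.1 h.2.2.1 h.2.2.2.1 h'.2.2.1
    h'.2.2.2.1 (hab ▸ odd_one) hw hw'
end
end
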